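/- arXiv:2509.03892 — 3 statements merged into one kernel-verified Lean document; each statement's English description precedes it below -/
import Mathlib

section
/- Let n ≥ 1 and let ReLU : ℝ → ℝ be defined by ReLU(t) = max(t, 0). Let F_{n,ReLU} = { x ↦ ReLU(v·x + b) : v ∈ ℝ^n, b ∈ ℝ }, a family of functions ℝ^n → ℝ. Then opt_std(F_{n,ReLU}) = n + 1: some deterministic learner makes at most n + 1 mistakes for every hidden f ∈ F_{n,ReLU} and every finite input sequence, and for every deterministic learner there exist f ∈ F_{n,ReLU} and a finite input sequence forcing at least n + 1 mistakes. -/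
/- Number of mistakes made by a deterministic learner `L` in the standard
(strong-feedback) online model, with hidden function `f`, starting from a given
history of past (input, correct output) pairs, on a finite input sequence. -/
open Classical in
noncomputable def stdMistakes {X Y : Type*} (L : List (X × Y) → X → Y) (f : X → Y) :
    List (X × Y) → List X → ℕ
  | _, [] => 0
  | hist, x :: xs =>
      (if L hist x = f x then 0 else 1) + stdMistakes L f (hist ++ [(x, f x)]) xs

/-- The span of the (embedded) inputs of a history whose outputs are positive. -/
def positiveSpan {X E : Type*} [AddCommGroup E] [Module ℝ E] (e : X → E)
    (hist : List (X × ℝ)) : Submodule ℝ E :=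
  Submodule.span ℝ {z | ∃ p ∈ hist, 0 < p.2 ∧ e p.1 = z}

/-- A linear functional whose positive part explains all answers of a history. -/
def ReluConsistent {X E : Type*} [AddCommGroup E] [Module ℝ E] (e : X → E)
    (hist : List (X × ℝ)) (φ : E →ₗ[ℝ] ℝ) : Prop :=
  ∀ p ∈ hist, max (φ (e p.1)) 0 = p.2

open Classical in
/-- The learner that answers according to a consistent functional on the span of the positive
inputs, and answers `0` elsewhere. -/
noncomputable def reluLearner {X E : Type*} [AddCommGroup E] [Module ℝ E] (e : X → E)
    (hist : List (X × ℝ)) (x : X) : ℝ :=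
  if h : e x ∈ positiveSpan e hist ∧ ∃ φ, ReluConsistent e hist φ then
    max (h.2.choose (e x)) 0
  else 0

section Upper

variable {X E : Type*} [AddCommGroup E] [Module ℝ E] {e : X → E} {hist : List (X × ℝ)}

theorem ReluConsistent.apply_eq_of_pos {φ : E →ₗ[ℝ] ℝ} (hφ : ReluConsistent e hist φ)
    {p : X × ℝ} (hp : p ∈ hist) (hpos : 0 < p.2) : φ (e p.1) = p.2 := by
  have h := hφ p hp
  rcases max_choice (φ (e p.1)) 0 with h' | h' <;> linarith

theorem ReluConsistent.eqOn_positiveSpan {φ ψ : E →ₗ[ℝ] ℝ} (hφ : ReluConsistent e hist φ)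
    (hψ : ReluConsistent e hist ψ) : Set.EqOn φ ψ (positiveSpan e hist) := by
  refine LinearMap.eqOn_span ?_
  rintro _ ⟨p, hp, hpos, rfl⟩
  rw [hφ.apply_eq_of_pos hp hpos, hψ.apply_eq_of_pos hp hpos]

theorem reluLearner_eq_of_mem {φ : E →ₗ[ℝ] ℝ} (hφ : ReluConsistent e hist φ) {x : X}
    (hx : e x ∈ positiveSpan e hist) : reluLearner e hist x = max (φ (e x)) 0 := by
  have h : e x ∈ positiveSpan e hist ∧ ∃ φ, ReluConsistent e hist φ := ⟨hx, φ, hφ⟩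
  rw [reluLearner, dif_pos h, h.2.choose_spec.eqOn_positiveSpan hφ hx]

theorem reluLearner_eq_zero {x : X} (hx : e x ∉ positiveSpan e hist) :
    reluLearner e hist x = 0 :=
  dif_neg fun h => hx h.1

theorem positiveSpan_le_append (l : List (X × ℝ)) :
    positiveSpan e hist ≤ positiveSpan e (hist ++ l) :=
  Submodule.span_mono fun _ ⟨p, hp, h⟩ => ⟨p, List.mem_append_left l hp, h⟩

theorem stdMistakes_reluLearner_add_finrank_le [FiniteDimensional ℝ E] (φ : E →ₗ[ℝ] ℝ)
    {f : X → ℝ} (hf : ∀ x, f x = max (φ (e x)) 0) (xs : List X) (hist : List (X × ℝ))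
    (hφ : ReluConsistent e hist φ) :
    stdMistakes (reluLearner e) f hist xs + Module.finrank ℝ (positiveSpan e hist) ≤
      Module.finrank ℝ E := by
  induction xs generalizing hist with
  | nil => simpa [stdMistakes] using Submodule.finrank_le (positiveSpan e hist)
  | cons x xs ih =>
    have hcons : ReluConsistent e (hist ++ [(x, f x)]) φ := by
      intro p hp
      rcases List.mem_append.1 hp with hp | hp
      · exact hφ p hp
      · obtain rfl := List.mem_singleton.1 hp
        exact (hf x).symm
    have hrec := ih _ hcons
    have hle := positiveSpan_le_append (e := e) (hist := hist) [(x, f x)]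
    rw [stdMistakes]
    split_ifs with hguess
    · have := Submodule.finrank_mono hle
      omega
    · have hx : e x ∉ positiveSpan e hist := fun hx =>
        hguess ((reluLearner_eq_of_mem hφ hx).trans (hf x).symm)
      rw [reluLearner_eq_zero hx] at hguess
      have hpos : 0 < f x := lt_of_le_of_ne (hf x ▸ le_max_right _ _) hguess
      have hmem : e x ∈ positiveSpan e (hist ++ [(x, f x)]) :=
        Submodule.subset_span ⟨(x, f x), by simp, hpos, rfl⟩
      have := Submodule.finrank_lt_finrank_of_lt
        (lt_of_le_of_ne hle fun h => hx (h ▸ hmem))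
      omega

end Upper

/-- On distinct inputs an adversary that is free to choose positive answers forces a mistake in
every round. -/
theorem exists_pos_forall_stdMistakes_eq_length {X : Type*} (L : List (X × ℝ) → X → ℝ)
    (xs : List X) (hxs : xs.Nodup) (hist : List (X × ℝ)) :
    ∃ c : X → ℝ, (∀ x, 0 < c x) ∧
      ∀ f : X → ℝ, (∀ x ∈ xs, f x = c x) → stdMistakes L f hist xs = xs.length := by
  classical
  induction xs generalizing hist with
  | nil => exact ⟨fun _ => 1, fun _ => one_pos, fun _ _ => rfl⟩
  | cons x xs ih =>
    obtain ⟨hx, hxs⟩ := List.nodup_cons.1 hxs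
    obtain ⟨y, hy, hLy⟩ : ∃ y : ℝ, 0 < y ∧ L hist x ≠ y := by
      by_cases h : L hist x = 1
      · exact ⟨2, two_pos, by rw [h]; norm_num⟩
      · exact ⟨1, one_pos, h⟩
    obtain ⟨c, hc, hforce⟩ := ih hxs (hist ++ [(x, y)])
    refine ⟨Function.update c x y, fun z => ?_, fun f hf => ?_⟩
    · rcases eq_or_ne z x with rfl | hz
      · simpa using hy
      · simpa [hz] using hc z
    · have hfx : f x = y := by simpa using hf x List.mem_cons_self
      have hrest : ∀ z ∈ xs, f z = c z := fun z hz => by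
        have hzx : z ≠ x := fun h => hx (h ▸ hz)
        simpa [hzx] using hf z (List.mem_cons_of_mem x hz)
      rw [stdMistakes, hfx, if_neg hLy, hforce f hrest, List.length_cons, add_comm]

/-- the family of 1-layer relu neural networks x ↦ ReLU(v·x + b)
on ℝ^n has standard optimal mistake bound exactly n + 1. -/
theorem stmt2 (n : ℕ) (hn : 1 ≤ n)
    (F : Set ((Fin n → ℝ) → ℝ))
    (hF : F = {g | ∃ (v : Fin n → ℝ) (b : ℝ),
        ∀ x, g x = max ((∑ i, v i * x i) + b) 0}) :
    (∃ L : List ((Fin n → ℝ) × ℝ) → (Fin n → ℝ) → ℝ,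
      ∀ f ∈ F, ∀ xs : List (Fin n → ℝ), stdMistakes L f [] xs ≤ n + 1) ∧
    (∀ L : List ((Fin n → ℝ) × ℝ) → (Fin n → ℝ) → ℝ,
      ∃ f ∈ F, ∃ xs : List (Fin n → ℝ), n + 1 ≤ stdMistakes L f [] xs) := by
  subst hF
  constructor
  · refine ⟨reluLearner fun x => (x, (1 : ℝ)), ?_⟩
    rintro f ⟨v, b, hf⟩ xs
    let φ : (Fin n → ℝ) × ℝ →ₗ[ℝ] ℝ :=
      (Fintype.linearCombination ℝ v).coprod (LinearMap.toSpanSingleton ℝ ℝ b)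
    have h := stdMistakes_reluLearner_add_finrank_le (e := fun x => (x, (1 : ℝ))) φ (f := f)
      (fun x => by simp [hf, φ, Fintype.linearCombination_apply, mul_comm]) xs []
      (by simp [ReluConsistent])
    simp only [Module.finrank_prod, Module.finrank_fin_fun, Module.finrank_self] at h
    omega
  · intro L
    let xs : List (Fin n → ℝ) := 0 :: List.ofFn fun i => Pi.single i 1
    have hxs : xs.Nodup := by
      refine List.nodup_cons.2 ⟨?_, List.nodup_ofFn.2 fun i j hij => ?_⟩
      · simp [List.mem_ofFn]
      · by_contra hne
        simpa [hne] using congrFun hij i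
    obtain ⟨c, hc, hforce⟩ := exists_pos_forall_stdMistakes_eq_length L xs hxs []
    refine ⟨_, ⟨fun i => c (Pi.single i 1) - c 0, c 0, fun _ => rfl⟩, xs, ?_⟩
    rw [hforce]
    · simp [xs]
    · intro x hx
      rcases List.mem_cons.1 hx with rfl | hx
      · simp [(hc 0).le]
      · obtain ⟨i, rfl⟩ := List.mem_ofFn.1 hx
        simp [Pi.single_apply, (hc _).le]
end

section
/- Let Y be a finite set of size k ≥ 2, let F be a family of functions X → Y, and suppose opt_std(F) ≤ M for a natural number M. Then for every natural number η, opt_ag,weak(F, η) ≤ (M · ln(3k) + η · ln 3) / (−ln(1 − 1/(3k))). In particular, opt_ag,weak(F, η) = O((k ln k) · opt_std(F) + k · η), matching the known lower bound up to a constant factor. -/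
/- Number of mistakes made by a deterministic learner `L` in the bandit
(weak-feedback) online model, with hidden function `f`: the history records past
inputs, the learner's past guesses, and whether each guess was correct. -/
open Classical in
noncomputable def bsMistakes {X Y : Type*} (L : List (X × Y × Bool) → X → Y) (f : X → Y) :
    List (X × Y × Bool) → List X → ℕ
  | _, [] => 0
  | hist, x :: xs =>
      (if L hist x = f x then 0 else 1) +
        bsMistakes L f (hist ++ [(x, L hist x, if L hist x = f x then true else false)]) xs

namespace WeakAgnostic

open Finset

theorem stdMistakes_append_singleton {X Y : Type*} (L : List (X × Y) → X → Y) (f : X → Y)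
    (xs : List X) (x : X) (hist : List (X × Y))
    (hx : L (hist ++ xs.map fun z => (z, f z)) x ≠ f x) :
    stdMistakes L f hist (xs ++ [x]) = stdMistakes L f hist xs + 1 := by
  induction xs generalizing hist with
  | nil => simp_all [stdMistakes]
  | cons z zs ih =>
    simp only [List.cons_append, stdMistakes]
    rw [ih (hist ++ [(z, f z)]) (by simpa using hx)]
    ring

/-- The factor by which the total weight of the experts shrinks at each mistake. -/
noncomputable def decay (k : ℕ) : ℝ := (1 - 1 / (3 * k)) ^ 2

section Decay

variable {k : ℕ}

theorem one_third_le_decay (hk : 2 ≤ k) : 1 / 3 ≤ decay k := by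
  have hk' : (2 : ℝ) ≤ k := by exact_mod_cast hk
  have h : 1 / (3 * (k : ℝ)) ≤ 1 / 6 := one_div_le_one_div_of_le (by norm_num) (by linarith)
  unfold decay
  nlinarith

theorem decay_pos (hk : 2 ≤ k) : 0 < decay k :=
  lt_of_lt_of_le (by norm_num) (one_third_le_decay hk)

theorem decay_le_one (hk : 2 ≤ k) : decay k ≤ 1 := by
  have hk' : (2 : ℝ) ≤ k := by exact_mod_cast hk
  have h : 1 / (3 * (k : ℝ)) ≤ 1 / 6 := one_div_le_one_div_of_le (by norm_num) (by linarith)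
  have h0 : 0 < 1 / (3 * (k : ℝ)) := by positivity
  unfold decay
  nlinarith

theorem mul_one_sub_decay_le (hk : 2 ≤ k) {r : ℝ} (hr0 : 0 ≤ r) (hr : r ≤ k) :
    r * (1 - decay k) ≤ 2 / 3 := by
  have hk' : (2 : ℝ) ≤ k := by exact_mod_cast hk
  have h1 : (k : ℝ) * (1 / (3 * k)) = 1 / 3 := by field_simp
  have h0 : 0 < 1 / (3 * (k : ℝ)) := by positivity
  have h2 : 1 - decay k ≤ 2 * (1 / (3 * (k : ℝ))) := by unfold decay; nlinarith
  nlinarith [mul_le_mul_of_nonneg_left h2 hr0]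

theorem four_ninths_le_decay_pow (hk : 2 ≤ k) {n : ℕ} (hn : n ≤ k) : 4 / 9 ≤ decay k ^ n := by
  refine le_trans ?_ (pow_le_pow_of_le_one (decay_pos hk).le (decay_le_one hk) hn)
  have hk' : (2 : ℝ) ≤ k := by exact_mod_cast hk
  have h : 1 / (3 * (k : ℝ)) ≤ 1 / 6 := one_div_le_one_div_of_le (by norm_num) (by linarith)
  have hb := one_add_mul_le_pow (a := -(1 / (3 * (k : ℝ)))) (by linarith) k
  have h1 : (k : ℝ) * (1 / (3 * k)) = 1 / 3 := by field_simp
  have h2 : 2 / 3 ≤ (1 - 1 / (3 * (k : ℝ))) ^ k := by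
    rw [sub_eq_add_neg]
    linarith
  unfold decay
  rw [pow_right_comm]
  calc (4 / 9 : ℝ) = (2 / 3) ^ 2 := by norm_num
    _ ≤ _ := pow_le_pow_left₀ (by norm_num) h2 2

end Decay

variable {X Y : Type*} [Fintype Y]

/-- An expert simulates the strong-feedback learner on an assumed history and regards the
inputs of a finite set as noisy. -/
abbrev Expert (X Y : Type*) := List (X × Y) × Finset X

/-- The values refuted so far at each input, and the current experts. -/
abbrev State (X Y : Type*) := (X → Finset Y) × List (Expert X Y)

noncomputable def weight (excl : X → Finset Y) (e : Expert X Y) : ℝ :=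
  (1 / (12 * (Fintype.card Y : ℝ))) ^ e.1.length *
    ∏ x ∈ e.2, (1 / 4 * decay (Fintype.card Y) ^ (excl x).card)

noncomputable def totalWeight (s : State X Y) : ℝ := (s.2.map (weight s.1)).sum

open Classical in
noncomputable def exclude (excl : X → Finset Y) (x : X) (y : Y) : X → Finset Y :=
  Function.update excl x (insert y (excl x))

open Classical in
/-- An expert whose prediction at a non-noisy `x` is refuted either declares `x` noisy or
appends some value at `x` to its history. -/
noncomputable def branch (L : List (X × Y) → X → Y) (excl : X → Finset Y) (x : X)
    (e : Expert X Y) : List (Expert X Y) :=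
  if x ∉ e.2 ∧ L e.1 x ∈ excl x then
    (e.1, insert x e.2) :: univ.toList.map fun z => (e.1 ++ [(x, z)], e.2)
  else [e]

noncomputable def refute (L : List (X × Y) → X → Y) (s : State X Y) (x : X) (y : Y) :
    State X Y :=
  (exclude s.1 x y, s.2.flatMap (branch L (exclude s.1 x y) x))

theorem weight_pos (hk : 2 ≤ Fintype.card Y) (excl : X → Finset Y) (e : Expert X Y) :
    0 < weight excl e := by
  have hd := decay_pos hk
  have hk' : 0 < Fintype.card Y := by omega
  unfold weight
  exact mul_pos (by positivity) (prod_pos fun x _ => by positivity)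

theorem weight_exclude_of_notMem (excl : X → Finset Y) (x : X) (y : Y) (e : Expert X Y)
    (hx : x ∉ e.2) : weight (exclude excl x y) e = weight excl e := by
  unfold weight
  congr 1
  refine prod_congr rfl fun z hz => ?_
  have : z ≠ x := fun h => hx (h ▸ hz)
  simp [exclude, this]

open Classical in
theorem weight_exclude_of_mem (excl : X → Finset Y) (x : X) (y : Y) (e : Expert X Y)
    (hx : x ∈ e.2) (hy : y ∉ excl x) :
    weight (exclude excl x y) e = decay (Fintype.card Y) * weight excl e := by
  unfold weight
  rw [← mul_prod_erase _ _ hx, ← mul_prod_erase _ (fun x => _ * _ ^ (excl x).card) hx]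
  have : ∀ z ∈ e.2.erase x, 1 / 4 * decay (Fintype.card Y) ^ (exclude excl x y z).card =
      1 / 4 * decay (Fintype.card Y) ^ (excl z).card := fun z hz => by
    simp [exclude, (mem_erase.mp hz).1]
  rw [prod_congr rfl this]
  simp only [exclude, Function.update_self, card_insert_of_notMem hy, pow_succ]
  ring

open Classical in
theorem sum_weight_split_le (hk : 2 ≤ Fintype.card Y) (excl : X → Finset Y) (x : X)
    (e : Expert X Y) (hx : x ∉ e.2) :
    (((e.1, insert x e.2) :: univ.toList.map fun z => (e.1 ++ [(x, z)], e.2)).map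
      (weight excl)).sum ≤ 1 / 3 * weight excl e := by
  have hk' : 0 < (Fintype.card Y : ℝ) := by exact_mod_cast (by omega : 0 < Fintype.card Y)
  have hnoise : weight excl (e.1, insert x e.2) ≤ 1 / 4 * weight excl e := by
    have h1 : weight excl (e.1, insert x e.2) =
        1 / 4 * decay (Fintype.card Y) ^ (excl x).card * weight excl e := by
      simp only [weight, prod_insert hx]
      ring
    rw [h1]
    have := pow_le_one₀ (n := (excl x).card) (decay_pos hk).le (decay_le_one hk)
    exact mul_le_mul_of_nonneg_right (by linarith) (weight_pos hk excl e).le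
  have hval : ∀ z : Y, weight excl (e.1 ++ [(x, z)], e.2) =
      1 / (12 * (Fintype.card Y : ℝ)) * weight excl e := fun z => by
    simp only [weight, List.length_append, List.length_singleton, pow_succ]
    ring
  simp only [List.map_cons, List.map_map, List.sum_cons, Finset.sum_map_toList,
    Function.comp_def, hval, sum_const, card_univ, nsmul_eq_mul]
  have : (Fintype.card Y : ℝ) * (1 / (12 * (Fintype.card Y : ℝ)) * weight excl e) =
      1 / 12 * weight excl e := by field_simp
  linarith

open Classical in
theorem sum_weight_branch_le (hk : 2 ≤ Fintype.card Y) (L : List (X × Y) → X → Y)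
    (excl : X → Finset Y) (x : X) (e : Expert X Y) :
    ∑ y ∈ (excl x)ᶜ, ((branch L (exclude excl x y) x e).map (weight (exclude excl x y))).sum ≤
      (excl x)ᶜ.card * (decay (Fintype.card Y) * weight excl e) := by
  have hw := weight_pos hk excl e
  have hd := one_third_le_decay hk
  rw [← nsmul_eq_mul]
  by_cases hN : x ∈ e.2
  · refine sum_le_card_nsmul _ _ _ fun y hy => ?_
    simp [branch, hN, weight_exclude_of_mem excl x y e hN (by simpa using hy)]
  have hsplit : ∀ y, L e.1 x ∈ exclude excl x y x →
      ((branch L (exclude excl x y) x e).map (weight (exclude excl x y))).sum ≤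
        1 / 3 * weight excl e := fun y hy => by
    rw [branch, if_pos ⟨hN, hy⟩, ← weight_exclude_of_notMem excl x y e hN]
    exact sum_weight_split_le hk _ x e hN
  by_cases hp : L e.1 x ∈ excl x
  · refine sum_le_card_nsmul _ _ _ fun y hy => (hsplit y (by simp [exclude, hp])).trans ?_
    exact mul_le_mul_of_nonneg_right hd hw.le
  · have hmem : L e.1 x ∈ (excl x)ᶜ := by simpa using hp
    have hstay : ∀ y ∈ (excl x)ᶜ.erase (L e.1 x),
        ((branch L (exclude excl x y) x e).map (weight (exclude excl x y))).sum ≤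
          weight excl e := fun y hy => by
      have : L e.1 x ≠ y := (mem_erase.mp hy).1.symm
      simp [branch, exclude, hp, this]
      exact (weight_exclude_of_notMem excl x y e hN).le
    have hsum := sum_le_card_nsmul _ _ _ hstay
    have hcard := card_erase_add_one hmem
    have hcard' : (((excl x)ᶜ.erase (L e.1 x)).card : ℝ) + 1 = (excl x)ᶜ.card := by
      exact_mod_cast hcard
    have hr : ((excl x)ᶜ.card : ℝ) ≤ Fintype.card Y := by exact_mod_cast card_le_univ _
    have hbound := mul_one_sub_decay_le hk (Nat.cast_nonneg _) hr
    rw [← add_sum_erase _ _ hmem]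
    have hself := hsplit (L e.1 x) (by simp [exclude])
    rw [nsmul_eq_mul] at hsum ⊢
    nlinarith [mul_le_mul_of_nonneg_right hbound hw.le]

theorem totalWeight_refute (L : List (X × Y) → X → Y) (s : State X Y) (x : X) (y : Y) :
    totalWeight (refute L s x y) =
      (s.2.map fun e =>
        ((branch L (exclude s.1 x y) x e).map (weight (exclude s.1 x y))).sum).sum := by
  simp only [totalWeight, refute]
  induction s.2 with
  | nil => simp
  | cons e es ih => simp [ih]

open Classical in
theorem exists_totalWeight_refute_le (hk : 2 ≤ Fintype.card Y) (L : List (X × Y) → X → Y)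
    (s : State X Y) (x : X) (hx : (s.1 x)ᶜ.Nonempty) :
    ∃ y, y ∉ s.1 x ∧
      totalWeight (refute L s x y) ≤ decay (Fintype.card Y) * totalWeight s := by
  obtain ⟨y, hy, h⟩ := exists_le_of_sum_le hx
    (f := fun y => totalWeight (refute L s x y))
    (g := fun _ => decay (Fintype.card Y) * totalWeight s) (by
      simp only [totalWeight_refute, sum_const, nsmul_eq_mul]
      unfold totalWeight
      induction s.2 with
      | nil => simp
      | cons e es ih =>
        simp only [List.map_cons, List.sum_cons, sum_add_distrib]
        linarith [sum_weight_branch_le hk L s.1 x e])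
  exact ⟨y, by simpa using hy, h⟩

noncomputable def guess [Nonempty Y] (L : List (X × Y) → X → Y) (s : State X Y) (x : X) : Y :=
  Classical.epsilon fun y => y ∉ s.1 x ∧
    totalWeight (refute L s x y) ≤ decay (Fintype.card Y) * totalWeight s

noncomputable def update (L : List (X × Y) → X → Y) (s : State X Y) (r : X × Y × Bool) :
    State X Y :=
  if r.2.2 then s else refute L s r.1 r.2.1

noncomputable def learner [Nonempty Y] (L : List (X × Y) → X → Y)
    (hist : List (X × Y × Bool)) (x : X) : Y :=
  guess L (hist.foldl (update L) (fun _ => ∅, [([], ∅)])) x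

/-- The state is compatible with the hidden function `g` and some expert follows `f`. -/
def Tracks (L : List (X × Y) → X → Y) (f g : X → Y) (s : State X Y) : Prop :=
  (∀ x, g x ∉ s.1 x) ∧ ∃ e ∈ s.2, (∀ x ∈ e.2, f x ≠ g x) ∧
    ∃ xs : List X, e.1 = xs.map (fun x => (x, f x)) ∧ stdMistakes L f [] xs = xs.length

open Classical in
theorem Tracks.refute {L : List (X × Y) → X → Y} {f g : X → Y} {s : State X Y}
    (hs : Tracks L f g s) {x : X} {y : Y} (hy : y ≠ g x) : Tracks L f g (refute L s x y) := by
  obtain ⟨hexcl, e, he, hnoise, xs, hxs, hmist⟩ := hs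
  have hexcl' : ∀ z, g z ∉ exclude s.1 x y z := fun z => by
    by_cases hz : z = x
    · subst hz
      simp [exclude, hexcl z, hy.symm]
    · simp [exclude, hz, hexcl z]
  refine ⟨hexcl', ?_⟩
  simp only [WeakAgnostic.refute, List.mem_flatMap]
  by_cases hb : x ∉ e.2 ∧ L e.1 x ∈ exclude s.1 x y x
  · by_cases hfg : f x = g x
    · refine ⟨(e.1 ++ [(x, f x)], e.2), ⟨e, he, ?_⟩, hnoise, xs ++ [x], by simp [hxs], ?_⟩
      · rw [branch, if_pos hb]
        simp
      · rw [stdMistakes_append_singleton, hmist, List.length_append, List.length_singleton]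
        rw [List.nil_append, ← hxs, hfg]
        exact fun h => hexcl' x (h ▸ hb.2)
    · refine ⟨(e.1, insert x e.2), ⟨e, he, ?_⟩, ?_, xs, hxs, hmist⟩
      · rw [branch, if_pos hb]
        simp
      · intro z hz
        rcases mem_insert.mp hz with rfl | hz
        · exact hfg
        · exact hnoise z hz
  · refine ⟨e, ⟨e, he, ?_⟩, hnoise, xs, hxs, hmist⟩
    rw [branch, if_neg hb]
    simp

theorem Tracks.le_totalWeight (hk : 2 ≤ Fintype.card Y) {L : List (X × Y) → X → Y}
    {f g : X → Y} {s : State X Y} (hs : Tracks L f g s) {M η : ℕ}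
    (hM : ∀ xs, stdMistakes L f [] xs ≤ M)
    (hη : {x | f x ≠ g x}.Finite ∧ {x | f x ≠ g x}.ncard ≤ η) :
    ((1 / (3 * (Fintype.card Y : ℝ))) ^ 2) ^ M * (1 / 9) ^ η ≤ totalWeight s := by
  obtain ⟨-, e, he, hnoise, xs, hxs, hmist⟩ := hs
  have hk' : (2 : ℝ) ≤ Fintype.card Y := by exact_mod_cast hk
  have hlen : e.1.length ≤ M := by
    rw [hxs, List.length_map, ← hmist]
    exact hM xs
  have hcard : e.2.card ≤ η := by
    rw [← Set.ncard_coe_finset]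
    exact (Set.ncard_le_ncard (fun x hx => hnoise x hx) hη.1).trans hη.2
  have hle : weight s.1 e ≤ totalWeight s :=
    List.single_le_sum (List.forall_mem_map.mpr fun a _ => (weight_pos hk s.1 a).le) _
      (List.mem_map_of_mem he)
  refine le_trans ?_ hle
  unfold weight
  have h9 : 12 * (Fintype.card Y : ℝ) ≤ (3 * (Fintype.card Y : ℝ)) ^ 2 := by nlinarith
  have hone : (1 / (3 * (Fintype.card Y : ℝ))) ^ 2 ≤ 1 := by
    refine pow_le_one₀ (by positivity) ?_
    rw [div_le_one (by positivity)]
    linarith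
  refine mul_le_mul ?_ ?_ (by positivity) (by positivity)
  · refine (pow_le_pow_of_le_one (by positivity) hone hlen).trans
      (pow_le_pow_left₀ (by positivity) ?_ _)
    rw [one_div_pow]
    exact one_div_le_one_div_of_le (by positivity) h9
  · refine (pow_le_pow_of_le_one (by norm_num) (by norm_num) hcard).trans ?_
    rw [← prod_const]
    refine prod_le_prod (fun _ _ => by norm_num) fun x _ => ?_
    linarith [four_ninths_le_decay_pow hk (card_le_univ (s.1 x))]

theorem decay_pow_bsMistakes_ge [Nonempty Y] (hk : 2 ≤ Fintype.card Y)
    {L : List (X × Y) → X → Y} {f g : X → Y} {M η : ℕ}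
    (hM : ∀ xs, stdMistakes L f [] xs ≤ M)
    (hη : {x | f x ≠ g x}.Finite ∧ {x | f x ≠ g x}.ncard ≤ η)
    (xs : List X) (hist : List (X × Y × Bool))
    (hs : Tracks L f g (hist.foldl (update L) (fun _ => ∅, [([], ∅)]))) :
    ((1 / (3 * (Fintype.card Y : ℝ))) ^ 2) ^ M * (1 / 9) ^ η ≤
      decay (Fintype.card Y) ^ bsMistakes (learner L) g hist xs *
        totalWeight (hist.foldl (update L) (fun _ => ∅, [([], ∅)])) := by
  classical
  induction xs generalizing hist with
  | nil => simpa [bsMistakes] using hs.le_totalWeight hk hM hη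
  | cons x xs ih =>
    rw [bsMistakes]
    by_cases hg : learner L hist x = g x
    · have := ih (hist ++ [(x, learner L hist x, true)]) (by simpa [update] using hs)
      simpa [update, hg] using this
    · have hstate : (hist ++ [(x, learner L hist x, false)]).foldl (update L)
          (fun _ => ∅, [([], ∅)]) = refute L (hist.foldl (update L) (fun _ => ∅, [([], ∅)])) x
            (learner L hist x) := by simp [update]
      have h := ih (hist ++ [(x, learner L hist x, false)])
        (by rw [hstate]; exact hs.refute hg)
      rw [hstate] at h
      have hle := (Classical.epsilon_spec (exists_totalWeight_refute_le hk L _ x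
        ⟨g x, by simpa using hs.1 x⟩)).2
      simp only [hg, if_false]
      refine h.trans ?_
      rw [pow_add, pow_one, mul_comm (decay _) (decay _ ^ _), mul_assoc]
      exact mul_le_mul_of_nonneg_left hle (pow_pos (decay_pos hk) _).le

end WeakAgnostic

/-- if opt_std(F) ≤ M and the codomain has size k ≥ 2, then the weak
(bandit-feedback) agnostic mistake bound with noise η is at most
(M ln(3k) + η ln 3) / (−ln(1 − 1/(3k))). -/
theorem stmt8 {X Y : Type*} [Fintype Y] (k : ℕ) (hk : 2 ≤ k)
    (hcard : Fintype.card Y = k) (F : Set (X → Y)) (M η : ℕ)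
    (hstd : ∃ L : List (X × Y) → X → Y, ∀ f ∈ F, ∀ xs : List X,
      stdMistakes L f [] xs ≤ M) :
    ∃ L : List (X × Y × Bool) → X → Y, ∀ g : X → Y,
      (∃ f ∈ F, {x | f x ≠ g x}.Finite ∧ {x | f x ≠ g x}.ncard ≤ η) →
      ∀ xs : List X, (bsMistakes L g [] xs : ℝ) ≤
        (M * Real.log (3 * k) + η * Real.log 3) / (-Real.log (1 - 1 / (3 * k))) := by
  subst hcard
  obtain ⟨L, hL⟩ := hstd
  have : Nonempty Y := Fintype.card_pos_iff.mp (by omega)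
  refine ⟨WeakAgnostic.learner L, fun g ⟨f, hf, hη⟩ xs => ?_⟩
  have hmain := WeakAgnostic.decay_pow_bsMistakes_ge hk (hL f hf) hη xs []
    ⟨by simp, ([], ∅), by simp, by simp, [], by simp, by simp [stdMistakes]⟩
  have hk' : (2 : ℝ) ≤ Fintype.card Y := by exact_mod_cast hk
  have hinv : 1 / (3 * (Fintype.card Y : ℝ)) ≤ 1 / 6 :=
    one_div_le_one_div_of_le (by norm_num) (by linarith)
  have hinv0 : 0 < 1 / (3 * (Fintype.card Y : ℝ)) := by positivity
  have hneg : Real.log (1 - 1 / (3 * (Fintype.card Y : ℝ))) < 0 :=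
    Real.log_neg (by linarith) (by linarith)
  have hlog := Real.log_le_log (by positivity) hmain
  have h9 : Real.log (1 / 9) = -(2 * Real.log 3) := by
    rw [show (1 / 9 : ℝ) = (3 ^ 2)⁻¹ by norm_num, Real.log_inv, Real.log_pow]
    norm_num
  have h3 : Real.log (1 / (3 * (Fintype.card Y : ℝ))) = -Real.log (3 * (Fintype.card Y : ℝ)) := by
    rw [one_div, Real.log_inv]
  simp only [List.foldl_nil, WeakAgnostic.totalWeight, WeakAgnostic.weight, List.map_cons,
    List.map_nil, List.sum_cons, List.sum_nil, List.length_nil, pow_zero, Finset.prod_empty,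
    mul_one, add_zero, WeakAgnostic.decay] at hlog
  rw [Real.log_mul (by positivity) (by positivity), Real.log_pow, Real.log_pow, Real.log_pow,
    Real.log_pow, Real.log_pow, h9, h3] at hlog
  rw [le_div_iff₀ (by linarith)]
  push_cast at hlog
  linarith
end

section
/- Let k be a prime power and n ≥ 2 an integer, and let F*_{k,n} be the combined family defined on the disjoint union 𝔽_k^n ⊔ ℤ. Then opt_std(F*_{k,n}) ≤ 2n: some deterministic learner makes at most 2n mistakes for every hidden f ∈ F*_{k,n} and every finite input sequence in the standard online model. -/
/- The family F_{k,n} of functions ℤ → 𝔽 that are 0 on all but at most n inputs. -/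
def FewSupp (𝔽 : Type*) [Zero 𝔽] (n : ℕ) : Set (ℤ → 𝔽) :=
  {h | {x : ℤ | h x ≠ 0}.Finite ∧ {x : ℤ | h x ≠ 0}.ncard ≤ n}

/- The family F_L(k,n) of linear functionals 𝔽^n → 𝔽. -/
def LinFam (𝔽 : Type*) [Field 𝔽] (n : ℕ) : Set ((Fin n → 𝔽) → 𝔽) :=
  {f | ∃ α : Fin n → 𝔽, f = fun x => ∑ i, α i * x i}

/- The combined family F*_{k,n} on the disjoint union 𝔽^n ⊔ ℤ. -/
def CombFam (𝔽 : Type*) [Field 𝔽] (n : ℕ) : Set (((Fin n → 𝔽) ⊕ ℤ) → 𝔽) :=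
  {f | ∃ (α : Fin n → 𝔽) (h : ℤ → 𝔽), h ∈ FewSupp 𝔽 n ∧
    f = Sum.elim (fun x => ∑ i, α i * x i) h}

theorem stdMistakes_le_of_potential {X Y : Type*} (L : List (X × Y) → X → Y) (f : X → Y)
    (Φ : List (X × Y) → ℕ) (mono : ∀ hist x, Φ (hist ++ [(x, f x)]) ≤ Φ hist)
    (strict : ∀ hist x, (∀ p ∈ hist, p.2 = f p.1) → L hist x ≠ f x →
      Φ (hist ++ [(x, f x)]) < Φ hist)
    (xs : List X) (hist : List (X × Y)) (hh : ∀ p ∈ hist, p.2 = f p.1) :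
    stdMistakes L f hist xs ≤ Φ hist := by
  induction xs generalizing hist with
  | nil => simp [stdMistakes]
  | cons x xs ih =>
    have h1 := ih (hist ++ [(x, f x)]) (by
      intro p hp
      rcases List.mem_append.1 hp with hp | hp
      · exact hh p hp
      · rw [List.mem_singleton.1 hp])
    have h2 := mono hist x
    rw [stdMistakes]
    split_ifs with h
    · omega
    · have h3 := strict hist x hh h
      omega

/-- Guess with some linear functional consistent with the history on the vector inputs; on the
integer inputs, repeat a recorded value, or answer `0` if there is none. -/
noncomputable def combLearner (𝔽 : Type*) [Field 𝔽] (n : ℕ)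
    (hist : List (((Fin n → 𝔽) ⊕ ℤ) × 𝔽)) : (Fin n → 𝔽) ⊕ ℤ → 𝔽 :=
  Sum.elim
    (fun x => (Classical.epsilon fun β : Fin n → 𝔽 =>
      ∀ y c, (Sum.inl y, c) ∈ hist → β ⬝ᵥ y = c) ⬝ᵥ x)
    (fun z => Classical.epsilon fun c : 𝔽 =>
      (Sum.inr z, c) ∈ hist ∨ ((∀ d, (Sum.inr z, d) ∉ hist) ∧ c = 0))

/-- The span of the vector inputs presented so far. -/
def seenSpan {𝔽 : Type*} [Field 𝔽] {n : ℕ} (hist : List (((Fin n → 𝔽) ⊕ ℤ) × 𝔽)) :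
    Submodule 𝔽 (Fin n → 𝔽) :=
  Submodule.span 𝔽 {y | ∃ c, (Sum.inl y, c) ∈ hist}

/-- The points of the support of `h` not presented so far. -/
def unseenSupport {V 𝔽 : Type*} [Zero 𝔽] (h : ℤ → 𝔽) (hist : List ((V ⊕ ℤ) × 𝔽)) : Set ℤ :=
  {z | h z ≠ 0 ∧ ∀ d, (Sum.inr z, d) ∉ hist}

theorem seenSpan_mono {𝔽 : Type*} [Field 𝔽] {n : ℕ} (hist hist' : List (((Fin n → 𝔽) ⊕ ℤ) × 𝔽)) :
    seenSpan hist ≤ seenSpan (hist ++ hist') :=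
  Submodule.span_mono fun _ ⟨c, hc⟩ => ⟨c, List.mem_append_left _ hc⟩

theorem unseenSupport_anti {V 𝔽 : Type*} [Zero 𝔽] (h : ℤ → 𝔽) (hist hist' : List ((V ⊕ ℤ) × 𝔽)) :
    unseenSupport h (hist ++ hist') ⊆ unseenSupport h hist :=
  fun _ hz => ⟨hz.1, fun d hd => hz.2 d (List.mem_append_left _ hd)⟩

theorem notMem_seenSpan_of_combLearner_ne {𝔽 : Type*} [Field 𝔽] {n : ℕ} (α : Fin n → 𝔽)
    (hist : List (((Fin n → 𝔽) ⊕ ℤ) × 𝔽)) (x : Fin n → 𝔽)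
    (hc : ∀ y c, (Sum.inl y, c) ∈ hist → α ⬝ᵥ y = c)
    (hne : combLearner 𝔽 n hist (Sum.inl x) ≠ α ⬝ᵥ x) : x ∉ seenSpan hist := by
  have hβ := Classical.epsilon_spec
    (p := fun β : Fin n → 𝔽 => ∀ y c, (Sum.inl y, c) ∈ hist → β ⬝ᵥ y = c) ⟨α, hc⟩
  intro hx
  apply hne
  simp only [combLearner, Sum.elim_inl]
  generalize Classical.epsilon (fun β : Fin n → 𝔽 =>
    ∀ y c, (Sum.inl y, c) ∈ hist → β ⬝ᵥ y = c) = β at hβ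
  refine Submodule.span_induction (p := fun y _ => β ⬝ᵥ y = α ⬝ᵥ y) ?_ ?_ ?_ ?_ hx
  · rintro y ⟨c, hy⟩
    rw [hβ y c hy, hc y c hy]
  · simp
  · intro y z _ _ hy hz
    rw [dotProduct_add, dotProduct_add, hy, hz]
  · intro a y _ hy
    rw [dotProduct_smul, dotProduct_smul, hy]

theorem mem_unseenSupport_of_combLearner_ne {𝔽 : Type*} [Field 𝔽] {n : ℕ} (h : ℤ → 𝔽)
    (hist : List (((Fin n → 𝔽) ⊕ ℤ) × 𝔽)) (z : ℤ) (hc : ∀ d, (Sum.inr z, d) ∈ hist → d = h z)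
    (hne : combLearner 𝔽 n hist (Sum.inr z) ≠ h z) : z ∈ unseenSupport h hist := by
  have hex : ∃ c : 𝔽, (Sum.inr z, c) ∈ hist ∨ ((∀ d, (Sum.inr z, d) ∉ hist) ∧ c = 0) := by
    by_cases hs : ∃ c, (Sum.inr z, c) ∈ hist
    · exact hs.imp fun _ => Or.inl
    · exact ⟨0, Or.inr ⟨not_exists.1 hs, rfl⟩⟩
  rcases Classical.epsilon_spec hex with hm | ⟨hu, h0⟩
  · exact absurd (hc _ hm) hne
  · exact ⟨fun hz => hne (h0.trans hz.symm), hu⟩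

/-- The number of mistakes `combLearner` can still make. -/
noncomputable def combPotential {𝔽 : Type*} [Field 𝔽] {n : ℕ} (h : ℤ → 𝔽)
    (hist : List (((Fin n → 𝔽) ⊕ ℤ) × 𝔽)) : ℕ :=
  (n - Module.finrank 𝔽 (seenSpan hist)) + (unseenSupport h hist).ncard

/-- for a finite field 𝔽 (of prime power order k) and n ≥ 2, the
combined family F*_{k,n} has standard optimal mistake bound at most 2n. -/
theorem stmt11 (𝔽 : Type*) [Field 𝔽] [Fintype 𝔽] (n : ℕ) (hn : 2 ≤ n) :
    ∃ L : List ((((Fin n → 𝔽) ⊕ ℤ)) × 𝔽) → ((Fin n → 𝔽) ⊕ ℤ) → 𝔽,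
      ∀ f ∈ CombFam 𝔽 n, ∀ xs : List ((Fin n → 𝔽) ⊕ ℤ),
        stdMistakes L f [] xs ≤ 2 * n := by
  refine ⟨combLearner 𝔽 n, ?_⟩
  rintro f ⟨α, h, ⟨hfin, hcard⟩, rfl⟩ xs
  have fin_unseen (hist : List (((Fin n → 𝔽) ⊕ ℤ) × 𝔽)) : (unseenSupport h hist).Finite :=
    hfin.subset fun _ hz => hz.1
  refine (stdMistakes_le_of_potential _ _ (combPotential h) ?_ ?_ xs [] (by simp)).trans ?_
  · intro hist x
    exact add_le_add (Nat.sub_le_sub_left (Submodule.finrank_mono (seenSpan_mono _ _)) _)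
      (Set.ncard_le_ncard (unseenSupport_anti h _ _) (fin_unseen _))
  · rintro hist (x | z) hc hne
    · refine add_lt_add_of_lt_of_le ?_
        (Set.ncard_le_ncard (unseenSupport_anti h _ _) (fin_unseen _))
      have hx := notMem_seenSpan_of_combLearner_ne α hist x (fun y c hy => (hc _ hy).symm) hne
      have hlt := Submodule.finrank_lt_finrank_of_lt (lt_of_le_of_ne
        (seenSpan_mono hist [(Sum.inl x, ∑ i, α i * x i)]) fun he => hx
          (he ▸ Submodule.subset_span ⟨_, List.mem_append_right _ (List.mem_singleton_self _)⟩))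
      have hle := Submodule.finrank_le (seenSpan (hist ++ [(Sum.inl x, ∑ i, α i * x i)]))
      rw [Module.finrank_fin_fun] at hle
      exact Nat.sub_lt_sub_left (hlt.trans_le hle) hlt
    · refine add_lt_add_of_le_of_lt
        (Nat.sub_le_sub_left (Submodule.finrank_mono (seenSpan_mono _ _)) _) ?_
      have hz := mem_unseenSupport_of_combLearner_ne h hist z (fun d hd => hc _ hd) hne
      refine Set.ncard_lt_ncard ((Set.ssubset_iff_of_subset (unseenSupport_anti h _ _)).2
        ⟨z, hz, fun hz' => hz'.2 (h z) ?_⟩) (fin_unseen _)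
      exact List.mem_append_right _ (List.mem_singleton_self _)
  · have hle := (Set.ncard_le_ncard (fun _ hz => hz.1 :
      unseenSupport h ([] : List (((Fin n → 𝔽) ⊕ ℤ) × 𝔽)) ⊆ {x | h x ≠ 0}) hfin).trans hcard
    unfold combPotential
    omega
end
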